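/- Let K, T ⊂ ℝ^{2n} be convex bodies. Then the function ε ↦ (c(K+εT)^{1/2} − c(K)^{1/2})/ε is nonincreasing on (0,∞); moreover, if 0 lies in the interior of K and R > 0 satisfies T ⊆ R·K, then this function is bounded above by R·c(K)^{1/2}. -/

import Mathlib

open MeasureTheory Real Set Filter intervalIntegral Metric
open scoped InnerProductSpace Topology Pointwise

noncomputable section

/-- The phase space `ℝ^{2n}`. -/
abbrev E (n : ℕ) := EuclideanSpace ℝ (Fin (2 * n))

/-- The standard complex structure `J` on `ℝ^{2n}`, given in coordinates
`(x₁,y₁,…,xₙ,yₙ)` by `J(x₁,y₁,…,xₙ,yₙ) = (−y₁,x₁,…,−yₙ,xₙ)`. -/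
def Jmap (n : ℕ) (v : E n) : E n := WithLp.toLp 2 fun i =>
  if _h : i.val % 2 = 0 then -v ⟨i.val + 1, by have := i.isLt; omega⟩
  else v ⟨i.val - 1, by have := i.isLt; omega⟩

/-- The support function `h_K(u) = sup_{x ∈ K} ⟨x, u⟩`. -/
def suppFn (n : ℕ) (K : Set (E n)) (u : E n) : ℝ :=
  sSup ((fun x => ⟪x, u⟫_ℝ) '' K)

/-- A convex body: a compact convex set with nonempty interior. -/
def IsConvexBody (n : ℕ) (K : Set (E n)) : Prop :=
  IsCompact K ∧ Convex ℝ K ∧ (interior K).Nonempty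

/-- Membership in the loop space `𝓔_p`: the pair `(z, dz)` represents an absolutely
continuous `2π`-periodic loop `z` with derivative `dz ∈ L^p([0,2π])`, mean zero and
normalized action `(1/2)∫₀^{2π} ⟨J z, ż⟩ = 1`. -/
def InE (n : ℕ) (p : ℝ) (z dz : ℝ → E n) : Prop :=
  Function.Periodic z (2 * π) ∧
  (∀ a b : ℝ, IntervalIntegrable dz volume a b) ∧
  (∀ t, z t = z 0 + ∫ s in (0:ℝ)..t, dz s) ∧
  MemLp dz (ENNReal.ofReal p) (volume.restrict (Set.Ioc (0:ℝ) (2 * π))) ∧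
  (∫ t in (0:ℝ)..(2 * π), z t) = 0 ∧
  (1 / 2) * ∫ t in (0:ℝ)..(2 * π), ⟪Jmap n (z t), dz t⟫_ℝ = 1

/-- The (Ekeland–Hofer–Zehnder) capacity of a convex body,
`c(S) = (π · inf_{z ∈ 𝓔₂} (1/2π) ∫₀^{2π} h_S(ż(t)) dt)²`. -/
def capacity (n : ℕ) (S : Set (E n)) : ℝ :=
  (π * sInf { r : ℝ | ∃ z dz : ℝ → E n, InE n 2 z dz ∧
      r = (1 / (2 * π)) * ∫ t in (0:ℝ)..(2 * π), suppFn n S (dz t) }) ^ 2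

/-- The action `𝒜(γ) = (1/2) ∫₀^{T₀} ⟨−Jγ̇(t), γ(t)⟩ dt` of a `T₀`-periodic curve. -/
def action (n : ℕ) (γ : ℝ → E n) (T₀ : ℝ) : ℝ :=
  (1 / 2) * ∫ t in (0:ℝ)..T₀, ⟪-Jmap n (deriv γ t), γ t⟫_ℝ

/-- A closed characteristic on `∂K`: a nonconstant `T₀`-periodic `C¹` curve lying on
`∂K` satisfying `γ̇ = d·J∇F(γ)` for some `d > 0`, where `F = ‖·‖_K²`. -/
def IsClosedCharacteristic (n : ℕ) (K : Set (E n)) (γ : ℝ → E n) (T₀ : ℝ) : Prop :=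
  0 < T₀ ∧ Function.Periodic γ T₀ ∧ ContDiff ℝ 1 γ ∧ (∃ s t, γ s ≠ γ t) ∧
  (∀ t, γ t ∈ frontier K) ∧
  ∃ d : ℝ, 0 < d ∧ ∀ t, deriv γ t = d • Jmap n (gradient (fun x => gauge K x ^ 2) (γ t))

/-- A capacity carrier of `K`: a closed characteristic on `∂K` of minimal action. -/
def IsCapacityCarrier (n : ℕ) (K : Set (E n)) (γ : ℝ → E n) (T₀ : ℝ) : Prop :=
  IsClosedCharacteristic n K γ T₀ ∧
  ∀ γ' T₀', IsClosedCharacteristic n K γ' T₀' → action n γ T₀ ≤ action n γ' T₀'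

/-- The minimal action of a closed characteristic on `∂K`. -/
def minAction (n : ℕ) (K : Set (E n)) : ℝ :=
  sInf { a : ℝ | ∃ γ T₀, IsClosedCharacteristic n K γ T₀ ∧ a = action n γ T₀ }

/-- `K` has smooth boundary: its gauge function is `C¹` away from the origin. -/
def HasSmoothBoundary (n : ℕ) (K : Set (E n)) : Prop :=
  ContDiffOn ℝ 1 (gauge K) {(0 : E n)}ᶜ

/-- The `p`-sum `K +ₚ T` of Firey: the convex body with support function
`(h_K^p + h_T^p)^{1/p}`. -/
def pSum (n : ℕ) (p : ℝ) (K T : Set (E n)) : Set (E n) :=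
  { x | ∀ u, ⟪x, u⟫_ℝ ≤ (suppFn n K u ^ p + suppFn n T u ^ p) ^ (1 / p) }

/-- The polar body `T° = {x : ⟨x,y⟩ ≤ 1 for all y ∈ T}`. -/
def polarBody (n : ℕ) (T : Set (E n)) : Set (E n) :=
  { x | ∀ y ∈ T, ⟪x, y⟫_ℝ ≤ 1 }

/-- The length `∫₀^{T₀} ‖γ̇(t)‖_B dt` of a curve measured with the gauge of `B`. -/
def lengthIn (n : ℕ) (B : Set (E n)) (γ : ℝ → E n) (T₀ : ℝ) : ℝ :=
  ∫ t in (0:ℝ)..T₀, gauge B (deriv γ t)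

/-- Critical point of the functional `I_p(z) = ∫₀^{2π} h_K^p(ż(t)) dt` on `𝓔_p`. -/
def IsCriticalPoint (n : ℕ) (p : ℝ) (K : Set (E n)) (z dz : ℝ → E n) : Prop :=
  ∀ ξ dξ : ℝ → E n,
    Function.Periodic ξ (2 * π) →
    (∀ a b : ℝ, IntervalIntegrable dξ volume a b) →
    (∀ t, ξ t = ξ 0 + ∫ s in (0:ℝ)..t, dξ s) →
    MemLp dξ (ENNReal.ofReal p) (volume.restrict (Set.Ioc (0:ℝ) (2 * π))) →
    (∫ t in (0:ℝ)..(2 * π), ξ t) = 0 →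
    (∫ t in (0:ℝ)..(2 * π), ⟪ξ t, Jmap n (dz t)⟫_ℝ) = 0 →
    (∫ t in (0:ℝ)..(2 * π), ⟪gradient (fun u => suppFn n K u ^ p) (dz t), dξ t⟫_ℝ) = 0

/-- The rotation-invariant probability measure on the unit sphere of `ℝ^{2n}`. -/
def sphereMeasure (n : ℕ) : Measure (sphere (0 : E n) 1) :=
  ((volume : Measure (E n)).toSphere Set.univ)⁻¹ • (volume : Measure (E n)).toSphere

/-- The mean width parameter `M*(K) = ∫_{S^{2n-1}} h_K dσ`. -/
def meanWidth (n : ℕ) (K : Set (E n)) : ℝ :=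
  ∫ x : sphere (0 : E n) 1, suppFn n K (x : E n) ∂(sphereMeasure n)

/-!
Since `h_{K+εT} = h_K + ε h_T`, the root capacity `√c(K + εT)` is `π` times the infimum, over the
loops `z ∈ 𝓔₂`, of the functions `ε ↦ mean(h_K ∘ ż) + ε · mean(h_T ∘ ż)`. An infimum of affine
functions is concave, and the slopes of a concave function issuing from a fixed point decrease.
If `T ⊆ R·K`, then `K + εT ⊆ K + εR·K`, whose root capacity is `(1 + εR) √c(K)`.
-/

section ConcaveInfimum

variable {ι V : Type*} [AddCommMonoid V] [SMul ℝ V] {s : Set V} {f : ι → V → ℝ}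

lemma concaveOn_iInf (hs : Convex ℝ s) (hf : ∀ i, ConcaveOn ℝ s (f i))
    (hbdd : ∀ x ∈ s, BddBelow (range fun i => f i x)) :
    ConcaveOn ℝ s fun x => ⨅ i, f i x := by
  rcases isEmpty_or_nonempty ι with _ | _
  · simpa only [Real.iInf_of_isEmpty] using concaveOn_const 0 hs
  refine ⟨hs, fun x hx y hy a b ha hb hab => le_ciInf fun i => ?_⟩
  calc a • (⨅ j, f j x) + b • (⨅ j, f j y)
      ≤ a • f i x + b • f i y := by
        gcongr
        exacts [ciInf_le (hbdd x hx) i, ciInf_le (hbdd y hy) i]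
    _ ≤ f i (a • x + b • y) := (hf i).2 hx hy ha hb hab

end ConcaveInfimum

section SupportFunction

variable {n : ℕ} {K T : Set (E n)} {v : ℝ → E n} {a b r : ℝ}

lemma bddAbove_image_inner (hK : Bornology.IsBounded K) (u : E n) :
    BddAbove ((fun x => ⟪x, u⟫_ℝ) '' K) := by
  obtain ⟨M, hM⟩ := hK.exists_norm_le
  refine ⟨M * ‖u‖, forall_mem_image.2 fun x hx => ?_⟩
  exact (real_inner_le_norm x u).trans (by gcongr; exact hM x hx)

lemma inner_le_suppFn (hK : Bornology.IsBounded K) {x : E n} (hx : x ∈ K) (u : E n) :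
    ⟪x, u⟫_ℝ ≤ suppFn n K u :=
  le_csSup (bddAbove_image_inner hK u) (mem_image_of_mem _ hx)

lemma suppFn_le (hK : K.Nonempty) {u : E n} {c : ℝ} (h : ∀ x ∈ K, ⟪x, u⟫_ℝ ≤ c) :
    suppFn n K u ≤ c :=
  csSup_le (hK.image _) (forall_mem_image.2 h)

lemma suppFn_mono (hK : K.Nonempty) (hT : Bornology.IsBounded T) (h : K ⊆ T) (u : E n) :
    suppFn n K u ≤ suppFn n T u :=
  suppFn_le hK fun _ hx => inner_le_suppFn hT (h hx) u

lemma suppFn_singleton (x u : E n) : suppFn n {x} u = ⟪x, u⟫_ℝ := by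
  simp only [suppFn, image_singleton, csSup_singleton]

lemma suppFn_zero (hK : K.Nonempty) : suppFn n K 0 = 0 := by
  simp only [suppFn, inner_zero_right, hK.image_const, csSup_singleton]

lemma suppFn_add (hK : Bornology.IsBounded K) (hK' : K.Nonempty)
    (hT : Bornology.IsBounded T) (hT' : T.Nonempty) (u : E n) :
    suppFn n (K + T) u = suppFn n K u + suppFn n T u := by
  have image_add : (fun x => ⟪x, u⟫_ℝ) '' (K + T) =
      (fun x => ⟪x, u⟫_ℝ) '' K + (fun x => ⟪x, u⟫_ℝ) '' T :=
    image_image2_distrib fun x y => inner_add_left x y u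
  rw [suppFn, image_add, csSup_add (hK'.image _) (bddAbove_image_inner hK u)
    (hT'.image _) (bddAbove_image_inner hT u), suppFn, suppFn]

lemma suppFn_smul (hr : 0 ≤ r) (K : Set (E n)) (u : E n) :
    suppFn n (r • K) u = r * suppFn n K u := by
  have image_smul : (fun x => ⟪x, u⟫_ℝ) '' (r • K) = r • (fun x => ⟪x, u⟫_ℝ) '' K :=
    image_smul_comm _ _ _ fun x => real_inner_smul_left x u r
  rw [suppFn, image_smul, Real.sSup_smul_of_nonneg hr, smul_eq_mul, suppFn]

lemma suppFn_add_smul (hK : Bornology.IsBounded K) (hK' : K.Nonempty)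
    (hT : Bornology.IsBounded T) (hT' : T.Nonempty) (hr : 0 ≤ r) (u : E n) :
    suppFn n (K + r • T) u = suppFn n K u + r * suppFn n T u := by
  rw [suppFn_add hK hK' (hT.smul₀ r) hT'.smul_set, suppFn_smul hr]

lemma exists_lipschitzWith_suppFn (hK : Bornology.IsBounded K) (hK' : K.Nonempty) :
    ∃ C, LipschitzWith C (suppFn n K) := by
  obtain ⟨M, hM⟩ := hK.exists_norm_le
  refine ⟨M.toNNReal, LipschitzWith.of_le_add_mul' M fun u w => suppFn_le hK' fun x hx => ?_⟩
  calc ⟪x, u⟫_ℝ = ⟪x, w⟫_ℝ + ⟪x, u - w⟫_ℝ := by rw [← inner_add_right, add_sub_cancel]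
    _ ≤ suppFn n K w + ‖x‖ * ‖u - w‖ :=
        add_le_add (inner_le_suppFn hK hx w) (real_inner_le_norm x (u - w))
    _ ≤ suppFn n K w + M * dist u w := by
        rw [dist_eq_norm]
        gcongr
        exact hM x hx

lemma intervalIntegrable_suppFn_comp (hK : Bornology.IsBounded K) (hK' : K.Nonempty)
    (hv : IntervalIntegrable v volume a b) :
    IntervalIntegrable (fun t => suppFn n K (v t)) volume a b := by
  obtain ⟨C, hC⟩ := exists_lipschitzWith_suppFn hK hK'
  rw [intervalIntegrable_iff, IntegrableOn, ← memLp_one_iff_integrable] at hv ⊢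
  exact hC.comp_memLp (suppFn_zero hK') hv

end SupportFunction

section MeanSupport

variable {n : ℕ} {K T : Set (E n)} {v : ℝ → E n} {r : ℝ}

/-- The mean `(1/2π) ∫₀^{2π} h_S(v(t)) dt` of the support function of `S` along the curve `v`,
which is meant to be the velocity of a loop. -/
def meanSupport (n : ℕ) (S : Set (E n)) (v : ℝ → E n) : ℝ :=
  (1 / (2 * π)) * ∫ t in (0 : ℝ)..(2 * π), suppFn n S (v t)

lemma meanSupport_mono (hK : Bornology.IsBounded K) (hK' : K.Nonempty)
    (hT : Bornology.IsBounded T) (h : K ⊆ T) (hv : IntervalIntegrable v volume 0 (2 * π)) :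
    meanSupport n K v ≤ meanSupport n T v :=
  mul_le_mul_of_nonneg_left
    (intervalIntegral.integral_mono two_pi_pos.le (intervalIntegrable_suppFn_comp hK hK' hv)
      (intervalIntegrable_suppFn_comp hT (hK'.mono h) hv) fun t => suppFn_mono hK' hT h (v t))
    (by positivity)

lemma meanSupport_add_smul (hK : Bornology.IsBounded K) (hK' : K.Nonempty)
    (hT : Bornology.IsBounded T) (hT' : T.Nonempty) (hr : 0 ≤ r)
    (hv : IntervalIntegrable v volume 0 (2 * π)) :
    meanSupport n (K + r • T) v = meanSupport n K v + r * meanSupport n T v := by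
  simp only [meanSupport, suppFn_add_smul hK hK' hT hT' hr]
  rw [intervalIntegral.integral_add (intervalIntegrable_suppFn_comp hK hK' hv)
    ((intervalIntegrable_suppFn_comp hT hT' hv).const_mul r),
    intervalIntegral.integral_const_mul]
  ring

lemma meanSupport_singleton (x : E n) (hv : IntervalIntegrable v volume 0 (2 * π)) :
    meanSupport n {x} v = (1 / (2 * π)) * ⟪x, ∫ t in (0 : ℝ)..(2 * π), v t⟫_ℝ := by
  simp only [meanSupport, suppFn_singleton]
  rw [← innerSL_apply_apply ℝ, ← (innerSL ℝ x).intervalIntegral_comp_comm hv]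
  simp only [innerSL_apply_apply]

lemma meanSupport_nonneg (hK : Bornology.IsBounded K) (hK' : K.Nonempty)
    (hv : IntervalIntegrable v volume 0 (2 * π)) (hv' : ∫ t in (0 : ℝ)..(2 * π), v t = 0) :
    0 ≤ meanSupport n K v := by
  obtain ⟨x, hx⟩ := hK'
  calc 0 = meanSupport n {x} v := by
        rw [meanSupport_singleton x hv, hv', inner_zero_right, mul_zero]
    _ ≤ meanSupport n K v :=
        meanSupport_mono Bornology.isBounded_singleton (singleton_nonempty x) hK
          (singleton_subset_iff.2 hx) hv

end MeanSupport

section NormalizedLoop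

variable {n : ℕ} {K : Set (E n)}

lemma InE.integral_velocity_eq_zero {p : ℝ} {z dz : ℝ → E n} (h : InE n p z dz) :
    ∫ t in (0 : ℝ)..(2 * π), dz t = 0 := by
  obtain ⟨periodic, -, z_eq, -⟩ := h
  have closes_up : z 0 + ∫ t in (0 : ℝ)..(2 * π), dz t = z 0 := by
    rw [← z_eq, periodic.eq]
  exact add_eq_left.1 closes_up

/-- An element of the loop space `𝓔₂`, bundled so that an infimum over `𝓔₂` becomes an indexed
infimum. The velocity is part of the data, because a loop determines it only almost everywhere. -/
structure NormalizedLoop (n : ℕ) where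
  curve : ℝ → E n
  velocity : ℝ → E n
  inE : InE n 2 curve velocity

lemma NormalizedLoop.intervalIntegrable_velocity (γ : NormalizedLoop n) :
    IntervalIntegrable γ.velocity volume 0 (2 * π) :=
  γ.inE.2.1 0 (2 * π)

lemma NormalizedLoop.meanSupport_nonneg (hK : Bornology.IsBounded K) (hK' : K.Nonempty)
    (γ : NormalizedLoop n) : 0 ≤ meanSupport n K γ.velocity :=
  _root_.meanSupport_nonneg hK hK' γ.intervalIntegrable_velocity
    γ.inE.integral_velocity_eq_zero

lemma NormalizedLoop.bddBelow_meanSupport (hK : Bornology.IsBounded K) (hK' : K.Nonempty) :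
    BddBelow (range fun γ : NormalizedLoop n => meanSupport n K γ.velocity) :=
  ⟨0, forall_mem_range.2 (NormalizedLoop.meanSupport_nonneg hK hK')⟩

end NormalizedLoop

section RootCapacity

variable {n : ℕ} {K T : Set (E n)} {r : ℝ}

lemma capacity_eq_sq_iInf (S : Set (E n)) :
    capacity n S = (π * ⨅ γ : NormalizedLoop n, meanSupport n S γ.velocity) ^ 2 := by
  rw [capacity, iInf]
  congr 3
  ext r
  constructor
  · rintro ⟨z, dz, hz, rfl⟩
    exact ⟨⟨z, dz, hz⟩, rfl⟩
  · rintro ⟨γ, rfl⟩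
    exact ⟨γ.curve, γ.velocity, γ.inE, rfl⟩

lemma sqrt_capacity_eq_iInf (hK : Bornology.IsBounded K) (hK' : K.Nonempty) :
    √(capacity n K) = π * ⨅ γ : NormalizedLoop n, meanSupport n K γ.velocity := by
  rw [capacity_eq_sq_iInf]
  exact sqrt_sq (mul_nonneg pi_nonneg (Real.iInf_nonneg (NormalizedLoop.meanSupport_nonneg hK hK')))

lemma sqrt_capacity_mono (hK : Bornology.IsBounded K) (hK' : K.Nonempty)
    (hT : Bornology.IsBounded T) (h : K ⊆ T) :
    √(capacity n K) ≤ √(capacity n T) := by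
  rw [sqrt_capacity_eq_iInf hK hK', sqrt_capacity_eq_iInf hT (hK'.mono h)]
  exact mul_le_mul_of_nonneg_left
    (ciInf_mono (NormalizedLoop.bddBelow_meanSupport hK hK') fun γ =>
      meanSupport_mono hK hK' hT h γ.intervalIntegrable_velocity) pi_nonneg

lemma sqrt_capacity_add_smul_eq_iInf (hK : Bornology.IsBounded K) (hK' : K.Nonempty)
    (hT : Bornology.IsBounded T) (hT' : T.Nonempty) (hr : 0 ≤ r) :
    √(capacity n (K + r • T)) =
      π * ⨅ γ : NormalizedLoop n,
        (meanSupport n K γ.velocity + r * meanSupport n T γ.velocity) := by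
  rw [sqrt_capacity_eq_iInf (hK.add (hT.smul₀ r)) (hK'.add hT'.smul_set)]
  congr! 3 with γ
  exact meanSupport_add_smul hK hK' hT hT' hr γ.intervalIntegrable_velocity

lemma sqrt_capacity_add_smul_self (hK : Bornology.IsBounded K) (hK' : K.Nonempty)
    (hr : 0 ≤ r) : √(capacity n (K + r • K)) = (1 + r) * √(capacity n K) := by
  rw [sqrt_capacity_add_smul_eq_iInf hK hK' hK hK' hr, sqrt_capacity_eq_iInf hK hK', mul_left_comm,
    Real.mul_iInf_of_nonneg (r := 1 + r) (by positivity)]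
  simp only [one_add_mul]

lemma concaveOn_sqrt_capacity_add_smul (hK : Bornology.IsBounded K) (hK' : K.Nonempty)
    (hT : Bornology.IsBounded T) (hT' : T.Nonempty) :
    ConcaveOn ℝ (Ici 0) fun ε : ℝ => √(capacity n (K + ε • T)) := by
  have concave_iInf : ConcaveOn ℝ (Ici 0) fun ε : ℝ =>
      ⨅ γ : NormalizedLoop n, (meanSupport n K γ.velocity + ε * meanSupport n T γ.velocity) := by
    refine concaveOn_iInf (convex_Ici 0) (fun γ => ?_)
      fun ε hε => ⟨0, forall_mem_range.2 fun γ => ?_⟩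
    · exact (concaveOn_const _ (convex_Ici 0)).add
        (((LinearMap.id (R := ℝ) (M := ℝ)).smulRight _).concaveOn (convex_Ici 0))
    · exact add_nonneg (γ.meanSupport_nonneg hK hK')
        (mul_nonneg hε (γ.meanSupport_nonneg hT hT'))
  exact (concave_iInf.smul pi_nonneg).congr fun ε hε =>
    (sqrt_capacity_add_smul_eq_iInf hK hK' hT hT' hε).symm

end RootCapacity

theorem difference_quotient_antitone_and_bounded_general {n : ℕ} {K T : Set (E n)}
    (hK : Bornology.IsBounded K) (hK' : K.Nonempty)
    (hT : Bornology.IsBounded T) (hT' : T.Nonempty) :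
    AntitoneOn (fun ε : ℝ => (√(capacity n (K + ε • T)) - √(capacity n K)) / ε) (Ioi 0) ∧
    ∀ R : ℝ, 0 ≤ R → T ⊆ R • K → ∀ ε : ℝ, 0 < ε →
      (√(capacity n (K + ε • T)) - √(capacity n K)) / ε ≤ R * √(capacity n K) := by
  constructor
  · have slope_antitone :=
      (concaveOn_sqrt_capacity_add_smul hK hK' hT hT').slope_anti self_mem_Ici
    rw [Ici_sdiff_left] at slope_antitone
    refine slope_antitone.congr fun ε _ => ?_
    simp only [slope_def_field, zero_smul_set hT', add_zero, sub_zero]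
  · intro R hR hTR ε hε
    have dilate_subset : K + ε • T ⊆ K + (ε * R) • K := by
      rw [mul_smul]
      gcongr
    have root_le : √(capacity n (K + ε • T)) ≤ (1 + ε * R) * √(capacity n K) := by
      rw [← sqrt_capacity_add_smul_self hK hK' (by positivity)]
      exact sqrt_capacity_mono (hK.add (hT.smul₀ ε)) (hK'.add hT'.smul_set)
        (hK.add (hK.smul₀ _)) dilate_subset
    rw [div_le_iff₀ hε]
    linarith

/-- The difference quotient `ε ↦ (c(K+εT)^{1/2} − c(K)^{1/2})/ε` is nonincreasing on
`(0,∞)`; moreover if `0 ∈ int K` and `T ⊆ R·K` then it is bounded above by `R·c(K)^{1/2}`. -/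
theorem difference_quotient_antitone_and_bounded (n : ℕ) (K T : Set (E n))
    (hK : IsConvexBody n K) (hT : IsConvexBody n T) :
    AntitoneOn (fun ε : ℝ =>
        (Real.sqrt (capacity n (K + ε • T)) - Real.sqrt (capacity n K)) / ε)
      (Set.Ioi (0:ℝ)) ∧
    ((0 : E n) ∈ interior K → ∀ R : ℝ, 0 < R → T ⊆ R • K → ∀ ε : ℝ, 0 < ε →
      (Real.sqrt (capacity n (K + ε • T)) - Real.sqrt (capacity n K)) / ε ≤
        R * Real.sqrt (capacity n K)) := by
  obtain ⟨antitone, bounded⟩ := difference_quotient_antitone_and_bounded_general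
    hK.1.isBounded (hK.2.2.mono interior_subset) hT.1.isBounded (hT.2.2.mono interior_subset)
  exact ⟨antitone, fun _ R hR => bounded R hR.le⟩
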